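/- (van der Corput lemma) Let G' be a second countable topological group with a right invariant measure μ' on its σ-algebra Σ' of Borel sets, let (Λ'_n) be a uniform Følner sequence in a Borel measurable subsemigroup K' ⊆ G', let H be a Hilbert space, and let f : G' → H be a bounded function such that ⟨f(·), x⟩ is Borel measurable for all x ∈ H and ⟨f(·), f(·)⟩ : G' × G' → ℂ is Borel measurable. Assume γ_h := lim_{n→∞} (1/μ'(Λ'_n)) ∫_{Λ'_n} ⟨f(g), f(gh)⟩ dg exists for all h ∈ G', and that lim_{m→∞} (1/μ'(Λ'_m)²) ∫_{Λ'_m} ∫_{Λ'_m} γ_{h₁⁻¹h₂} dh₁ dh₂ = 0. Then lim_{n→∞} (1/μ'(Λ'_n)) ∫_{Λ'_n} f dμ' = 0. -/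

import Mathlib

open MeasureTheory Filter Topology
open scoped Pointwise

/-!
Write `P_n` for normalized `μ` on `Λ n`, and `γ_n h = ∫ ⟪f g, f (g * h)⟫ dP_n`. Fix `m` and choose
`n` so large that `P_n` is almost invariant under right translation by every element of `Λ m`.
Then `∫ f dP_n` is close to the `P_n`-average over `g` of the inner averages
`∫ f (g * h) dP_m(h)`, and by Jensen's inequality its squared norm is almost bounded by
`∫∫∫ ⟪f (g * h₁), f (g * h₂)⟫ dP_m(h₁) dP_m(h₂) dP_n(g)`. Translating `g` by `h₁⁻¹` turns this
triple integral, up to a small error, into `∫∫ γ_n (h₁⁻¹ * h₂) dP_m(h₁) dP_m(h₂)`. As `n → ∞` the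
latter tends to `∫∫ γ (h₁⁻¹ * h₂) dP_m(h₁) dP_m(h₂)`, which is small for large `m`.
-/

open scoped InnerProductSpace ProbabilityTheory symmDiff

section WeakIntegral

variable {𝕜 H X Y : Type*} [RCLike 𝕜] [NormedAddCommGroup H] [InnerProductSpace 𝕜 H]
  [MeasurableSpace X] [MeasurableSpace Y] {ν : Measure X} {F : X → H} {v : H}

variable (𝕜) in
/-- `v` is the weak integral of `F`, that is, the vector representing `x ↦ ∫ ⟪F g, x⟫ dν(g)`.
All the scalar integrals are required to converge, so that none of them is `0` by convention. -/
def IsWeakIntegral (ν : Measure X) (F : X → H) (v : H) : Prop :=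
  ∀ x, Integrable (fun g => ⟪F g, x⟫_𝕜) ν ∧ ⟪v, x⟫_𝕜 = ∫ g, ⟪F g, x⟫_𝕜 ∂ν

theorem IsWeakIntegral.unique {w : H} (hv : IsWeakIntegral 𝕜 ν F v)
    (hw : IsWeakIntegral 𝕜 ν F w) : v = w :=
  ext_inner_right 𝕜 fun x => (hv x).2.trans (hw x).2.symm

theorem norm_inner_le_sq_of_norm_le {x y : H} {C : ℝ} (hx : ‖x‖ ≤ C) (hy : ‖y‖ ≤ C) :
    ‖⟪x, y⟫_𝕜‖ ≤ C ^ 2 := by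
  have hC : 0 ≤ C := (norm_nonneg x).trans hx
  calc ‖⟪x, y⟫_𝕜‖ ≤ ‖x‖ * ‖y‖ := norm_inner_le_norm x y
    _ ≤ C * C := by gcongr
    _ = C ^ 2 := (sq C).symm

theorem norm_inner_le_mul_norm_of_norm_le {x : H} {C : ℝ} (hx : ‖x‖ ≤ C) (y : H) :
    ‖⟪x, y⟫_𝕜‖ ≤ C * ‖y‖ :=
  (norm_inner_le_norm x y).trans (by gcongr)

theorem isWeakIntegral_integral [CompleteSpace H] [NormedSpace ℝ H] (hF : Integrable F ν) :
    IsWeakIntegral 𝕜 ν F (∫ g, F g ∂ν) := by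
  refine fun x => ⟨hF.inner_const x, ?_⟩
  rw [← inner_conj_symm, ← integral_inner hF, ← integral_conj]
  simp only [inner_conj_symm]

theorem exists_isWeakIntegral [CompleteSpace H] [IsFiniteMeasure ν] {C : ℝ}
    (hC : ∀ᵐ g ∂ν, ‖F g‖ ≤ C) (hF : ∀ x, AEStronglyMeasurable (fun g => ⟪F g, x⟫_𝕜) ν) :
    ∃ v, IsWeakIntegral 𝕜 ν F v := by
  have hbound (x : H) : ∀ᵐ g ∂ν, ‖⟪F g, x⟫_𝕜‖ ≤ C * ‖x‖ :=
    hC.mono fun g hg => norm_inner_le_mul_norm_of_norm_le hg x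
  have hint (x : H) : Integrable (fun g => ⟪F g, x⟫_𝕜) ν := .of_bound (hF x) _ (hbound x)
  let L : StrongDual 𝕜 H := LinearMap.mkContinuous
    { toFun := fun x => ∫ g, ⟪F g, x⟫_𝕜 ∂ν
      map_add' := fun x y => by
        simp only [inner_add_right, integral_add (hint x) (hint y)]
      map_smul' := fun c x => by
        simp only [inner_smul_right, integral_const_mul, RingHom.id_apply, smul_eq_mul] }
    (C * ν.real Set.univ) fun x =>
      (norm_integral_le_of_norm_le_const (hbound x)).trans_eq (mul_right_comm _ _ _)
  exact ⟨(InnerProductSpace.toDual 𝕜 H).symm L,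
    fun x => ⟨hint x, InnerProductSpace.toDual_symm_apply⟩⟩

theorem IsWeakIntegral.norm_integral_le [CompleteSpace H] [NormedSpace ℝ H]
    (hv : IsWeakIntegral 𝕜 ν F v) : ‖∫ g, F g ∂ν‖ ≤ ‖v‖ := by
  by_cases hF : Integrable F ν
  · rw [hv.unique (isWeakIntegral_integral hF)]
  · simp [integral_undef hF]

theorem IsWeakIntegral.integral_prod_inner [SFinite ν] (hv : IsWeakIntegral 𝕜 ν F v)
    (hFF : Integrable (fun p : X × X => ⟪F p.1, F p.2⟫_𝕜) (ν.prod ν)) :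
    ∫ p, ⟪F p.1, F p.2⟫_𝕜 ∂ν.prod ν = ⟪v, v⟫_𝕜 := by
  calc ∫ p, ⟪F p.1, F p.2⟫_𝕜 ∂ν.prod ν = ∫ h, ∫ g, ⟪F g, F h⟫_𝕜 ∂ν ∂ν := integral_prod_symm _ hFF
    _ = ∫ h, (starRingEnd 𝕜) ⟪F h, v⟫_𝕜 ∂ν := by simp only [← (hv _).2, inner_conj_symm]
    _ = ⟪v, v⟫_𝕜 := by rw [integral_conj, ← (hv v).2, inner_conj_symm]

theorem norm_integral_sq_le_integral_norm_sq {E : Type*} [NormedAddCommGroup E]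
    [NormedSpace ℝ E] [CompleteSpace E] [IsProbabilityMeasure ν] {φ : X → E}
    (hφ : Integrable φ ν) (hφ2 : Integrable (fun g => ‖φ g‖ ^ 2) ν) :
    ‖∫ g, φ g ∂ν‖ ^ 2 ≤ ∫ g, ‖φ g‖ ^ 2 ∂ν :=
  (convexOn_univ_norm.pow (fun _ _ => norm_nonneg _) 2).map_integral_le (by fun_prop)
    isClosed_univ (ae_of_all _ fun _ => Set.mem_univ _) hφ hφ2

theorem norm_integral_integral_inner_sq_le [CompleteSpace H] [IsProbabilityMeasure ν]
    {Q : Measure Y} [IsFiniteMeasure Q] {F : X → Y → H} {C : ℝ} (hC : ∀ g h, ‖F g h‖ ≤ C)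
    (hF : ∀ x, Measurable fun q : X × Y => ⟪F q.1 q.2, x⟫_𝕜)
    (hFF : Measurable fun q : X × Y × Y => ⟪F q.1 q.2.1, F q.1 q.2.2⟫_𝕜) (x : H) :
    ‖∫ g, ∫ h, ⟪F g h, x⟫_𝕜 ∂Q ∂ν‖ ^ 2 ≤
      ‖x‖ ^ 2 * ‖∫ g, ∫ p, ⟪F g p.1, F g p.2⟫_𝕜 ∂Q.prod Q ∂ν‖ := by
  have hFF_int : Integrable (fun q : X × Y × Y => ⟪F q.1 q.2.1, F q.1 q.2.2⟫_𝕜)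
      (ν.prod (Q.prod Q)) :=
    .of_bound hFF.aestronglyMeasurable (C ^ 2)
      (ae_of_all _ fun _ => norm_inner_le_sq_of_norm_le (hC _ _) (hC _ _))
  have hF_int : Integrable (fun q : X × Y => ⟪F q.1 q.2, x⟫_𝕜) (ν.prod Q) :=
    .of_bound (hF x).aestronglyMeasurable (C * ‖x‖)
      (ae_of_all _ fun _ => norm_inner_le_mul_norm_of_norm_le (hC _ _) x)
  choose v hv using fun g => exists_isWeakIntegral (𝕜 := 𝕜) (ν := Q) (ae_of_all _ (hC g))
    fun y => ((hF y).comp measurable_prodMk_left).aestronglyMeasurable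
  have hvv (g : X) : ∫ p, ⟪F g p.1, F g p.2⟫_𝕜 ∂Q.prod Q = (‖v g‖ : 𝕜) ^ 2 := by
    rw [(hv g).integral_prod_inner (.of_bound
      (hFF.comp measurable_prodMk_left).aestronglyMeasurable (C ^ 2)
      (ae_of_all _ fun _ => norm_inner_le_sq_of_norm_le (hC _ _) (hC _ _))),
      inner_self_eq_norm_sq_to_K]
  have hv_int : Integrable (fun g => ⟪v g, x⟫_𝕜) ν := by
    simpa only [(hv _ x).2] using hF_int.integral_prod_left
  have hv_sq_int : Integrable (fun g => ‖v g‖ ^ 2) ν := by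
    have := hFF_int.integral_prod_left.norm
    simpa only [hvv, norm_pow, RCLike.norm_ofReal, abs_norm] using this
  have hle (g : X) : ‖⟪v g, x⟫_𝕜‖ ^ 2 ≤ ‖x‖ ^ 2 * ‖v g‖ ^ 2 := by
    rw [← mul_pow, mul_comm]
    gcongr
    exact norm_inner_le_norm _ _
  have hv_inner_sq_int : Integrable (fun g => ‖⟪v g, x⟫_𝕜‖ ^ 2) ν :=
    (hv_sq_int.const_mul (‖x‖ ^ 2)).mono' (hv_int.aestronglyMeasurable.norm.pow 2)
      (ae_of_all _ fun g => by simpa using hle g)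
  calc ‖∫ g, ∫ h, ⟪F g h, x⟫_𝕜 ∂Q ∂ν‖ ^ 2
      = ‖∫ g, ⟪v g, x⟫_𝕜 ∂ν‖ ^ 2 := by simp only [(hv _ x).2]
    _ ≤ ∫ g, ‖⟪v g, x⟫_𝕜‖ ^ 2 ∂ν := norm_integral_sq_le_integral_norm_sq hv_int hv_inner_sq_int
    _ ≤ ∫ g, ‖x‖ ^ 2 * ‖v g‖ ^ 2 ∂ν :=
        integral_mono hv_inner_sq_int (hv_sq_int.const_mul _) hle
    _ = ‖x‖ ^ 2 * ‖∫ g, ∫ p, ⟪F g p.1, F g p.2⟫_𝕜 ∂Q.prod Q ∂ν‖ := by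
        have hnonneg : 0 ≤ ∫ g, ‖v g‖ ^ 2 ∂ν := integral_nonneg fun g => sq_nonneg ‖v g‖
        simp only [hvv, integral_const_mul, ← RCLike.ofReal_pow, integral_ofReal,
          RCLike.norm_ofReal, abs_of_nonneg hnonneg]

end WeakIntegral

section AlmostInvariance

theorem norm_setIntegral_sub_setIntegral_le {X E : Type*} [MeasurableSpace X]
    [NormedAddCommGroup E] [NormedSpace ℝ E] {μ : Measure X} {φ : X → E} {s t : Set X} {B : ℝ}
    (hs : MeasurableSet s) (ht : MeasurableSet t) (hφs : IntegrableOn φ s μ)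
    (hφt : IntegrableOn φ t μ) (hst : μ (s ∆ t) ≠ ⊤) (hB : ∀ g ∈ s ∆ t, ‖φ g‖ ≤ B) :
    ‖∫ g in s, φ g ∂μ - ∫ g in t, φ g ∂μ‖ ≤ B * μ.real (s ∆ t) := by
  have hst_fin : μ (s \ t) < ⊤ := (measure_mono le_sup_left).trans_lt hst.lt_top
  have hts_fin : μ (t \ s) < ⊤ := (measure_mono le_sup_right).trans_lt hst.lt_top
  calc ‖∫ g in s, φ g ∂μ - ∫ g in t, φ g ∂μ‖
      = ‖∫ g in s \ t, φ g ∂μ - ∫ g in t \ s, φ g ∂μ‖ := by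
        rw [← integral_inter_add_sdiff ht hφs, ← integral_inter_add_sdiff hs hφt,
          Set.inter_comm t s, add_sub_add_left_eq_sub]
    _ ≤ B * μ.real (s \ t) + B * μ.real (t \ s) := (norm_sub_le _ _).trans <| add_le_add
        (norm_setIntegral_le_of_norm_le_const hst_fin fun g hg => hB g (.inl hg))
        (norm_setIntegral_le_of_norm_le_const hts_fin fun g hg => hB g (.inr hg))
    _ = B * μ.real (s ∆ t) := by
        rw [Set.symmDiff_def, measureReal_union disjoint_sdiff_sdiff (ht.diff hs) hst_fin.ne
          hts_fin.ne, mul_add]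

variable {𝕜 G : Type*} [RCLike 𝕜] [Group G] [MeasurableSpace G] {δ : ℝ}

variable (𝕜) in
/-- Right translation by `h` moves `P` by at most `δ`, tested on bounded measurable functions:
this is the form in which the Følner property enters. -/
def IsAlmostRightInvariant (P : Measure G) (δ : ℝ) (h : G) : Prop :=
  ∀ (φ : G → 𝕜) (B : ℝ), Measurable φ → (∀ g, ‖φ g‖ ≤ B) →
    ‖∫ g, φ (g * h) ∂P - ∫ g, φ g ∂P‖ ≤ B * δ

theorem IsAlmostRightInvariant.nonneg {P : Measure G} {h : G}
    (hP : IsAlmostRightInvariant 𝕜 P δ h) : 0 ≤ δ := by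
  simpa using hP 0 1 measurable_zero (by simp)

theorem isMulRightInvariant_of_measure_mul_singleton [MeasurableMul G] {μ : Measure G}
    (hμ : ∀ (s : Set G) (g : G), MeasurableSet s → μ (s * {g}) = μ s) :
    μ.IsMulRightInvariant := by
  refine ⟨fun g => Measure.ext fun s hs => ?_⟩
  rw [Measure.map_apply (measurable_mul_const g) hs, ← hμ s g⁻¹ hs, Set.mul_singleton,
    Set.image_mul_right, inv_inv]

theorem integral_cond {X E : Type*} [MeasurableSpace X] [NormedAddCommGroup E] [NormedSpace ℝ E]
    (μ : Measure X) (s : Set X) (φ : X → E) :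
    ∫ g, φ g ∂μ[|s] = (μ.real s)⁻¹ • ∫ g in s, φ g ∂μ := by
  rw [ProbabilityTheory.cond, ← setAverage_eq', setAverage_eq]

theorem isAlmostRightInvariant_cond [MeasurableMul G] {μ : Measure G} [μ.IsMulRightInvariant]
    {s : Set G} {h : G} (hs : MeasurableSet s) (hs0 : μ s ≠ 0) (hs_top : μ s ≠ ⊤)
    (hδ : μ.real (s ∆ (s * {h})) ≤ δ * μ.real s) : IsAlmostRightInvariant 𝕜 μ[|s] δ h := by
  intro φ B hφ hB
  have hemb : MeasurableEmbedding (· * h) := measurableEmbedding_mulRight h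
  have himage : s * {h} = (· * h) '' s := Set.mul_singleton
  have hsh : MeasurableSet (s * {h}) := himage ▸ hemb.measurableSet_image.2 hs
  have hsh_top : μ (s * {h}) ≠ ⊤ := by
    rwa [himage, Set.image_mul_right, measure_preimage_mul_right]
  have htranslate : ∫ g in s, φ (g * h) ∂μ = ∫ g in s * {h}, φ g ∂μ := by
    rw [himage, (measurePreserving_mul_right μ h).setIntegral_image_emb hemb]
  have hint {t : Set G} (ht : μ t ≠ ⊤) : IntegrableOn φ t μ :=
    Measure.integrableOn_of_bounded ht hφ.aestronglyMeasurable (ae_of_all _ hB)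
  have hB0 : 0 ≤ B := (norm_nonneg _).trans (hB 1)
  have hpos : 0 < μ.real s := ENNReal.toReal_pos hs0 hs_top
  have hdiff : ‖∫ g in s, φ (g * h) ∂μ - ∫ g in s, φ g ∂μ‖ ≤ B * (δ * μ.real s) := by
    rw [htranslate, norm_sub_rev]
    exact (norm_setIntegral_sub_setIntegral_le hs hsh (hint hs_top) (hint hsh_top)
      (measure_symmDiff_ne_top hs_top hsh_top) fun g _ => hB g).trans (by gcongr)
  rwa [integral_cond, integral_cond, ← smul_sub, norm_smul, norm_inv, Real.norm_of_nonneg hpos.le,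
    inv_mul_le_iff₀ hpos, mul_left_comm, mul_comm (μ.real s)]

theorem norm_integral_integral_mul_right_sub_le [MeasurableMul₂ G] {Ω : Type*}
    [MeasurableSpace Ω] {P : Measure G} [IsFiniteMeasure P] {Q : Measure Ω} [IsFiniteMeasure Q]
    {k : Ω → G} (hk : Measurable k) {Φ : Ω → G → 𝕜} (hΦ : Measurable fun q : Ω × G => Φ q.1 q.2)
    {B : ℝ} (hB : ∀ ω g, ‖Φ ω g‖ ≤ B) (hP : ∀ᵐ ω ∂Q, IsAlmostRightInvariant 𝕜 P δ (k ω)) :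
    ‖∫ g, ∫ ω, Φ ω (g * k ω) ∂Q ∂P - ∫ ω, ∫ g, Φ ω g ∂P ∂Q‖ ≤ B * δ * Q.real Set.univ := by
  have hshift : Integrable (fun q : G × Ω => Φ q.2 (q.1 * k q.2)) (P.prod Q) :=
    .of_bound (Measurable.aestronglyMeasurable <| hΦ.comp <| measurable_snd.prodMk <|
      measurable_fst.mul (hk.comp measurable_snd)) B (ae_of_all _ fun _ => hB _ _)
  have hΦ_int : Integrable (fun q : Ω × G => Φ q.1 q.2) (Q.prod P) :=
    .of_bound hΦ.aestronglyMeasurable B (ae_of_all _ fun _ => hB _ _)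
  rw [integral_integral_swap hshift,
    ← integral_sub hshift.integral_prod_right hΦ_int.integral_prod_left]
  exact norm_integral_le_of_norm_le_const <| hP.mono fun ω hω =>
    hω (Φ ω) B (hΦ.comp measurable_prodMk_left) (hB ω)

end AlmostInvariance

section VanDerCorput

variable {𝕜 G H : Type*} [RCLike 𝕜] [Group G] [MeasurableSpace G] [NormedAddCommGroup H]
  [InnerProductSpace 𝕜 H] {f : G → H} {C : ℝ}

variable (𝕜) in
/-- The autocorrelation function of `f` with respect to `P`; the `γ` of the van der Corput lemma is
the limit of these along the normalized Følner sequence. -/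
noncomputable def autocorrelation (P : Measure G) (f : G → H) (h : G) : 𝕜 :=
  ∫ g, ⟪f g, f (g * h)⟫_𝕜 ∂P

theorem norm_autocorrelation_le {P : Measure G} [IsProbabilityMeasure P] (hC : ∀ g, ‖f g‖ ≤ C)
    (h : G) : ‖autocorrelation 𝕜 P f h‖ ≤ C ^ 2 := by
  simpa [autocorrelation] using norm_integral_le_of_norm_le_const
    (ae_of_all P fun g => norm_inner_le_sq_of_norm_le (𝕜 := 𝕜) (hC g) (hC (g * h)))

variable [MeasurableMul₂ G]

theorem measurable_autocorrelation {P : Measure G} [SFinite P]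
    (hff : Measurable fun p : G × G => ⟪f p.1, f p.2⟫_𝕜) : Measurable (autocorrelation 𝕜 P f) :=
  (StronglyMeasurable.integral_prod_right' (f := fun p : G × G => ⟪f p.2, f (p.2 * p.1)⟫_𝕜)
    (hff.comp (measurable_snd.prodMk (measurable_snd.mul measurable_fst))).stronglyMeasurable
    ).measurable

variable [MeasurableInv G]

theorem IsWeakIntegral.norm_le_of_isAlmostRightInvariant [CompleteSpace H] {P Q : Measure G}
    [IsProbabilityMeasure P] [IsProbabilityMeasure Q] {δ : ℝ} {v : H} (hC : ∀ g, ‖f g‖ ≤ C)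
    (hf : ∀ x, Measurable fun g => ⟪f g, x⟫_𝕜)
    (hff : Measurable fun p : G × G => ⟪f p.1, f p.2⟫_𝕜)
    (hP : ∀ᵐ h ∂Q, IsAlmostRightInvariant 𝕜 P δ h) (hv : IsWeakIntegral 𝕜 P f v) :
    ‖v‖ ≤ C * δ + √(‖∫ p, autocorrelation 𝕜 P f (p.1⁻¹ * p.2) ∂Q.prod Q‖ + C ^ 2 * δ) := by
  set D := ∫ p, autocorrelation 𝕜 P f (p.1⁻¹ * p.2) ∂Q.prod Q
  set S := ∫ g, ∫ h, ⟪f (g * h), v⟫_𝕜 ∂Q ∂P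
  set T := ∫ g, ∫ p : G × G, ⟪f (g * p.1), f (g * p.2)⟫_𝕜 ∂Q.prod Q ∂P
  have hSv : ‖S - ⟪v, v⟫_𝕜‖ ≤ C * ‖v‖ * δ := by
    have := norm_integral_integral_mul_right_sub_le measurable_id
      (Φ := fun _ g => ⟪f g, v⟫_𝕜) ((hf v).comp measurable_snd)
      (fun _ g => norm_inner_le_mul_norm_of_norm_le (hC g) v) hP
    simpa [← (hv v).2] using this
  have hTD : ‖T - D‖ ≤ C ^ 2 * δ := by
    have hmeas : Measurable fun q : (G × G) × G => (q.2, q.2 * (q.1.1⁻¹ * q.1.2)) := by fun_prop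
    have := norm_integral_integral_mul_right_sub_le (Q := Q.prod Q) measurable_fst
      (Φ := fun p g => ⟪f g, f (g * (p.1⁻¹ * p.2))⟫_𝕜) (hff.comp hmeas)
      (fun p g => norm_inner_le_sq_of_norm_le (hC g) (hC _))
      (Measure.quasiMeasurePreserving_fst.ae hP)
    simpa [T, D, autocorrelation, mul_assoc] using this
  have hST : ‖S‖ ^ 2 ≤ ‖v‖ ^ 2 * ‖T‖ := by
    have hmeas : Measurable fun q : G × G × G => (q.1 * q.2.1, q.1 * q.2.2) := by fun_prop
    exact norm_integral_integral_inner_sq_le (fun g h => hC (g * h))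
      (fun x => (hf x).comp measurable_mul) (hff.comp hmeas) v
  have hδ : 0 ≤ δ := hP.exists.elim fun _ => IsAlmostRightInvariant.nonneg
  have hS : ‖S‖ ≤ ‖v‖ * √(‖D‖ + C ^ 2 * δ) := by
    have hT : ‖T‖ ≤ ‖D‖ + C ^ 2 * δ := by linarith [norm_le_norm_add_norm_sub' T D]
    rw [← sq_le_sq₀ (norm_nonneg S) (by positivity), mul_pow, Real.sq_sqrt (by positivity)]
    exact hST.trans (by gcongr)
  obtain rfl | hv0 := eq_or_ne v 0
  · have hC0 : 0 ≤ C := (norm_nonneg _).trans (hC 1)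
    rw [norm_zero]
    positivity
  · refine le_of_mul_le_mul_left ?_ (norm_pos_iff.2 hv0)
    have hvv : ‖v‖ * ‖v‖ = ‖⟪v, v⟫_𝕜‖ := by
      rw [inner_self_eq_norm_sq_to_K, norm_pow, RCLike.norm_ofReal, abs_norm, sq]
    linarith [norm_le_norm_add_norm_sub S ⟪v, v⟫_𝕜]

variable {ι : Type*} {l : Filter ι} [l.IsCountablyGenerated] {γ : G → 𝕜}

theorem tendsto_integral_autocorrelation {P : ι → Measure G} [∀ n, SFinite (P n)]
    (hP : ∀ᶠ n in l, IsProbabilityMeasure (P n)) {Q : Measure G} [IsFiniteMeasure Q]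
    (hC : ∀ g, ‖f g‖ ≤ C) (hff : Measurable fun p : G × G => ⟪f p.1, f p.2⟫_𝕜)
    (hγ : ∀ h, Tendsto (fun n => autocorrelation 𝕜 (P n) f h) l (𝓝 (γ h))) :
    Tendsto (fun n => ∫ p, autocorrelation 𝕜 (P n) f (p.1⁻¹ * p.2) ∂Q.prod Q) l
      (𝓝 (∫ h₁, ∫ h₂, γ (h₁⁻¹ * h₂) ∂Q ∂Q)) := by
  obtain rfl | _ := l.eq_or_neBot
  · exact tendsto_bot
  have hdiv : Measurable fun p : G × G => p.1⁻¹ * p.2 := by fun_prop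
  have hmeas (n : ι) : AEStronglyMeasurable
      (fun p : G × G => autocorrelation 𝕜 (P n) f (p.1⁻¹ * p.2)) (Q.prod Q) :=
    ((measurable_autocorrelation hff).comp hdiv).aestronglyMeasurable
  have hγ_le (h : G) : ‖γ h‖ ≤ C ^ 2 :=
    le_of_tendsto (hγ h).norm (hP.mono fun n _ => norm_autocorrelation_le hC h)
  have hγ_int : Integrable (fun p : G × G => γ (p.1⁻¹ * p.2)) (Q.prod Q) :=
    .of_bound (aestronglyMeasurable_of_tendsto_ae l hmeas (ae_of_all _ fun _ => hγ _)) (C ^ 2)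
      (ae_of_all _ fun _ => hγ_le _)
  rw [← integral_prod _ hγ_int]
  exact tendsto_integral_filter_of_dominated_convergence (fun _ => C ^ 2) (.of_forall hmeas)
    (hP.mono fun n _ => ae_of_all _ fun _ => norm_autocorrelation_le hC _)
    (integrable_const _) (ae_of_all _ fun _ => hγ _)

theorem tendsto_zero_of_tendsto_autocorrelation [CompleteSpace H] {P : ι → Measure G}
    [∀ n, SFinite (P n)] (hP : ∀ᶠ n in l, IsProbabilityMeasure (P n))
    (hinv : ∀ᶠ m in l, ∀ δ > 0, ∀ᶠ n in l, ∀ᵐ h ∂P m, IsAlmostRightInvariant 𝕜 (P n) δ h)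
    (hC : ∀ g, ‖f g‖ ≤ C) (hf : ∀ x, Measurable fun g => ⟪f g, x⟫_𝕜)
    (hff : Measurable fun p : G × G => ⟪f p.1, f p.2⟫_𝕜)
    (hγ : ∀ h, Tendsto (fun n => autocorrelation 𝕜 (P n) f h) l (𝓝 (γ h)))
    (hγ0 : Tendsto (fun m => ∫ h₁, ∫ h₂, γ (h₁⁻¹ * h₂) ∂P m ∂P m) l (𝓝 0))
    {v : ι → H} (hv : ∀ n, IsWeakIntegral 𝕜 (P n) f (v n)) : Tendsto v l (𝓝 0) := by
  obtain rfl | _ := l.eq_or_neBot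
  · exact tendsto_bot
  refine Metric.tendsto_nhds.2 fun ε hε => ?_
  have hbound : Tendsto (fun δ : ℝ => C * δ + √(δ + C ^ 2 * δ)) (𝓝[>] 0) (𝓝 0) :=
    (Continuous.tendsto' (by fun_prop) 0 0 (by simp)).mono_left nhdsWithin_le_nhds
  obtain ⟨δ, hδε, hδ⟩ := ((hbound.eventually_lt_const hε).and self_mem_nhdsWithin).exists
  obtain ⟨m, hm_prob, hm_inv, hm_small⟩ :=
    (hP.and (hinv.and (hγ0.norm.eventually_lt_const (by simpa using hδ)))).exists
  filter_upwards [hP, hm_inv δ hδ,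
    (tendsto_integral_autocorrelation hP hC hff hγ).norm.eventually_lt_const hm_small]
    with n hn_prob hn_inv hn_small
  rw [dist_zero_right]
  calc ‖v n‖ ≤ C * δ + √(‖∫ p, autocorrelation 𝕜 (P n) f (p.1⁻¹ * p.2) ∂(P m).prod (P m)‖
        + C ^ 2 * δ) := (hv n).norm_le_of_isAlmostRightInvariant hC hf hff hn_inv
    _ ≤ C * δ + √(δ + C ^ 2 * δ) := by gcongr
    _ < ε := hδε

end VanDerCorput

theorem van_der_Corput_general {𝕜 G H ι : Type*} [RCLike 𝕜] [Group G] [MeasurableSpace G]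
    [MeasurableMul₂ G] [MeasurableInv G] {μ : Measure G} [μ.IsMulRightInvariant]
    {l : Filter ι} [l.IsCountablyGenerated] {Λ : ι → Set G} (hΛ : ∀ n, MeasurableSet (Λ n))
    (hΛfin : ∀ᶠ n in l, 0 < μ (Λ n) ∧ μ (Λ n) < ⊤)
    (hΛunif : ∀ᶠ m in l, ∀ ε > 0, ∀ᶠ n in l, ∀ g ∈ Λ m,
      μ.real (Λ n ∆ (Λ n * {g})) ≤ ε * μ.real (Λ n))
    [NormedAddCommGroup H] [InnerProductSpace 𝕜 H] [CompleteSpace H]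
    {f : G → H} {C : ℝ} (hC : ∀ g, ‖f g‖ ≤ C) (hf : ∀ x, Measurable fun g => ⟪f g, x⟫_𝕜)
    (hff : Measurable fun p : G × G => ⟪f p.1, f p.2⟫_𝕜) {γ : G → 𝕜}
    (hγ : ∀ h, Tendsto (fun n => ∫ g, ⟪f g, f (g * h)⟫_𝕜 ∂μ[|Λ n]) l (𝓝 (γ h)))
    (hγ0 : Tendsto (fun m => ∫ h₁, ∫ h₂, γ (h₁⁻¹ * h₂) ∂μ[|Λ m] ∂μ[|Λ m]) l (𝓝 0))
    {v : ι → H} (hv : ∀ n, IsWeakIntegral 𝕜 μ[|Λ n] f (v n)) : Tendsto v l (𝓝 0) := by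
  have hP : ∀ᶠ n in l, IsProbabilityMeasure μ[|Λ n] := hΛfin.mono fun n hn =>
    ProbabilityTheory.cond_isProbabilityMeasure_of_finite hn.1.ne' hn.2.ne
  refine tendsto_zero_of_tendsto_autocorrelation hP ?_ hC hf hff hγ hγ0 hv
  filter_upwards [hΛunif] with m hm δ hδ
  filter_upwards [hm δ hδ, hΛfin] with n hn hn_fin
  exact (ProbabilityTheory.ae_cond_mem (hΛ m)).mono fun h hh =>
    isAlmostRightInvariant_cond (hΛ n) hn_fin.1.ne' hn_fin.2.ne (hn h hh)

/-- **Lemma 5.1(1), the "van der Corput" lemma.**  Let `G'` be a second countable topological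
group with a right invariant Borel measure `μ`, `(Λ n)` a uniform Følner sequence in a Borel
measurable subsemigroup `K ⊆ G'`, `H` a Hilbert space and `f : G' → H` bounded and weakly
Borel measurable with `⟨f(·), f(·)⟩` Borel measurable.  If
`γ h = lim_n (1/μ(Λ n)) ∫_{Λ n} ⟨f(g), f(gh)⟩ dg` exists for all `h` and
`lim_m (1/μ(Λ m)²) ∫_{Λ m} ∫_{Λ m} γ (h₁⁻¹ h₂) dh₁ dh₂ = 0`, then
`lim_n (1/μ(Λ n)) ∫_{Λ n} f dμ = 0`. -/
theorem van_der_Corput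
    -- a second countable topological group G' with right invariant Borel measure μ
    {G' : Type*} [Group G'] [TopologicalSpace G'] [IsTopologicalGroup G']
    [SecondCountableTopology G'] [MeasurableSpace G'] [BorelSpace G']
    (μ : Measure G')
    (hRight : ∀ (V : Set G') (g : G'), MeasurableSet V → μ (V * {g}) = μ V)
    -- a Borel measurable subsemigroup K of G'
    (K : Set G') (hKmeas : MeasurableSet K) (hKmul : ∀ g ∈ K, ∀ h ∈ K, g * h ∈ K)
    -- a uniform Følner sequence (Λ n) in K
    (Λ : ℕ → Set G') (hΛmeas : ∀ n, MeasurableSet (Λ n) ∧ Λ n ⊆ K)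
    (hΛfin : ∀ᶠ n in atTop, 0 < μ (Λ n) ∧ μ (Λ n) < ⊤)
    (hΛfolner : ∀ g ∈ K, Tendsto
      (fun n => (μ (symmDiff (Λ n) (Λ n * {g}))).toReal / (μ (Λ n)).toReal) atTop (𝓝 0))
    (hΛunif : ∀ᶠ m in atTop, ∀ ε > (0 : ℝ), ∀ᶠ n in atTop, ∀ g ∈ Λ m,
      (μ (symmDiff (Λ n) (Λ n * {g}))).toReal ≤ ε * (μ (Λ n)).toReal)
    -- a Hilbert space H and a bounded, weakly measurable function f : G' → H
    {H : Type*} [NormedAddCommGroup H] [InnerProductSpace ℂ H] [CompleteSpace H]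
    (f : G' → H) (hbdd : ∃ C : ℝ, ∀ g, ‖f g‖ ≤ C)
    (hweak : ∀ x : H, Measurable fun g => (inner ℂ (f g) x : ℂ))
    (hff : Measurable fun p : G' × G' => (inner ℂ (f p.1) (f p.2) : ℂ))
    -- γ h is the limit of the correlation averages
    (γ : G' → ℂ)
    (hγ : ∀ h : G', Tendsto
      (fun n => (μ (Λ n)).toReal⁻¹ • ∫ g in Λ n, (inner ℂ (f g) (f (g * h)) : ℂ) ∂μ)
      atTop (𝓝 (γ h)))
    -- the van der Corput condition (5.1)
    (hγ0 : Tendsto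
      (fun m => ((μ (Λ m)).toReal ^ 2)⁻¹ • ∫ h₁ in Λ m, ∫ h₂ in Λ m, γ (h₁⁻¹ * h₂) ∂μ ∂μ)
      atTop (𝓝 0)) :
    -- conclusion
    Tendsto (fun n => (μ (Λ n)).toReal⁻¹ • ∫ g in Λ n, f g ∂μ) atTop (𝓝 (0 : H)) := by
  have : μ.IsMulRightInvariant := isMulRightInvariant_of_measure_mul_singleton hRight
  obtain ⟨C, hC⟩ := hbdd
  choose v hv using fun n => exists_isWeakIntegral (𝕜 := ℂ) (ν := μ[|Λ n]) (ae_of_all _ hC)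
    fun x => (hweak x).aestronglyMeasurable
  have hv0 : Tendsto v atTop (𝓝 0) :=
    van_der_Corput_general (fun n => (hΛmeas n).1) hΛfin hΛunif hC hweak hff
      (by simpa only [integral_cond, Measure.real] using hγ)
      (by simpa only [integral_cond, Measure.real, integral_smul, smul_smul, ← sq, inv_pow]
        using hγ0) hv
  refine squeeze_zero_norm (fun n => ?_) (tendsto_zero_iff_norm_tendsto_zero.1 hv0)
  simpa only [integral_cond, Measure.real] using (hv n).norm_integral_le
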